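/- Let n ∈ ℕ and let A, B, J, K ∈ Matrix (Fin n) (Fin n) ℝ with J and K invertible, and suppose Kᵀ · B = Bᵀ · K (equivalently, the matrix B · K⁻¹ is symmetric). Then det(A · J⁻¹ − B · K⁻¹) · det(J) · det(Kᵀ) = det(Kᵀ · A − Bᵀ · J). -/

import Mathlib

open Matrix

/-- The determinant manipulation for the amplitude determinant factor:
if `J`, `K` are invertible and `Kᵀ·B = Bᵀ·K`, then
`det(A·J⁻¹ − B·K⁻¹) · det J · det Kᵀ = det(Kᵀ·A − Bᵀ·J)`. -/
theorem det_shape_operator_wronskian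
    (n : ℕ) (A B J K : Matrix (Fin n) (Fin n) ℝ)
    (hJ : IsUnit J.det) (hK : IsUnit K.det)
    (hsym : Kᵀ * B = Bᵀ * K) :
    (A * J⁻¹ - B * K⁻¹).det * J.det * Kᵀ.det = (Kᵀ * A - Bᵀ * J).det := by
  have h1 : Kᵀ * (B * K⁻¹) = Bᵀ := by
    rw [← Matrix.mul_assoc, hsym, Matrix.mul_assoc, Matrix.mul_nonsing_inv K hK, Matrix.mul_one]
  have h2 : Kᵀ * (A * J⁻¹ - B * K⁻¹) * J = Kᵀ * A - Bᵀ * J := by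
    rw [Matrix.mul_sub, h1, Matrix.sub_mul, Matrix.mul_assoc, Matrix.mul_assoc A,
      Matrix.nonsing_inv_mul J hJ, Matrix.mul_one]
  rw [← h2, Matrix.det_mul, Matrix.det_mul]
  ring
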